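/- There is a universal constant K > 0 such that for every m ∈ ℕ there exists an online factorization algorithm in the column arrival model for matrices with m rows with the following guarantee: for every N ∈ ℕ and every m×N real matrix A with columns a_1,…,a_N, when the algorithm is run on (a_1,…,a_N) it outputs matrices L_t and column vectors r_t satisfying ‖r_t‖_2 ≤ 1 for every t ∈ {1,…,N} and ‖L_N‖_{2→∞} ≤ K·γ2(A)·(log₂(2m))³. -/

import Mathlib

open Matrix

/-- `‖M‖_{2→∞}`: the maximum ℓ2 norm of a row of `M`. -/
noncomputable def rowNorm2inf {α β : Type*} [Fintype α] [Fintype β] (M : Matrix α β ℝ) : ℝ :=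
  ⨆ i, Real.sqrt (∑ j, (M i j) ^ 2)

/-- `‖M‖_{1→2}`: the maximum ℓ2 norm of a column of `M`. -/
noncomputable def colNorm12 {α β : Type*} [Fintype α] [Fintype β] (M : Matrix α β ℝ) : ℝ :=
  ⨆ j, Real.sqrt (∑ i, (M i j) ^ 2)

/-- The γ₂ factorization norm. -/
noncomputable def gamma2 {α β : Type*} [Fintype α] [Fintype β] (A : Matrix α β ℝ) : ℝ :=
  sInf { c : ℝ | ∃ (k : ℕ) (L : Matrix α (Fin k) ℝ) (R : Matrix (Fin k) β ℝ),
    L * R = A ∧ c = rowNorm2inf L * colNorm12 R }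

namespace OF

/-- Weighted squared Euclidean norm. -/
noncomputable def wn {m : ℕ} (p x : Fin m → ℝ) : ℝ := ∑ i, p i * (x i) ^ 2

/-- `x` is a combination of the columns in `L` with squared coefficient norm at most `θ`. -/
def Cov {m : ℕ} (L : List (Fin m → ℝ)) (θ : ℝ) (x : Fin m → ℝ) : Prop :=
  ∃ y : ℕ → ℝ, ∑ i ∈ Finset.range L.length, (y i) ^ 2 ≤ θ ∧
    ∀ t, ∑ i ∈ Finset.range L.length, (L.getD i 0) t * y i = x t

/-- Squared norm of a row of the matrix with columns `L`. -/
def rowsq {m : ℕ} (L : List (Fin m → ℝ)) (t : Fin m) : ℝ :=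
  ∑ i ∈ Finset.range L.length, ((L.getD i 0) t) ^ 2

lemma rowsq_append {m : ℕ} (L W : List (Fin m → ℝ)) (t : Fin m) :
    rowsq (L ++ W) t = rowsq L t + rowsq W t := by
  unfold rowsq
  rw [List.length_append, Finset.sum_range_add]
  congr 1
  · refine Finset.sum_congr rfl fun i hi => ?_
    rw [List.getD_append _ _ _ _ (Finset.mem_range.1 hi)]
  · refine Finset.sum_congr rfl fun i hi => ?_
    rw [List.getD_append_right _ _ _ _ (by omega)]
    simp

lemma rowsq_smul {m : ℕ} (L : List (Fin m → ℝ)) (c : ℝ) (t : Fin m) :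
    rowsq (L.map (fun w => c • w)) t = c ^ 2 * rowsq L t := by
  unfold rowsq
  rw [List.length_map, Finset.mul_sum]
  refine Finset.sum_congr rfl fun i hi => ?_
  have hi' := Finset.mem_range.1 hi
  simp [List.getD_eq_getElem?_getD, hi', mul_pow]

lemma Cov.append {m : ℕ} {L W : List (Fin m → ℝ)} {θ₁ θ₂ : ℝ} {x₁ x₂ : Fin m → ℝ}
    (h₁ : Cov L θ₁ x₁) (h₂ : Cov W θ₂ x₂) : Cov (L ++ W) (θ₁ + θ₂) (x₁ + x₂) := by
  obtain ⟨y, hy, hy'⟩ := h₁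
  obtain ⟨z, hz, hz'⟩ := h₂
  have key : ∀ i ∈ Finset.range L.length, i < L.length := fun i hi => Finset.mem_range.1 hi
  refine ⟨fun i => if i < L.length then y i else z (i - L.length), ?_, fun t => ?_⟩
  · rw [List.length_append, Finset.sum_range_add]
    refine add_le_add (le_trans (le_of_eq ?_) hy) (le_trans (le_of_eq ?_) hz)
    · exact Finset.sum_congr rfl fun i hi => by simp [key i hi]
    · exact Finset.sum_congr rfl fun i hi => by simp
  · rw [List.length_append, Finset.sum_range_add, Pi.add_apply, ← hy' t, ← hz' t]
    congr 1
    · refine Finset.sum_congr rfl fun i hi => ?_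
      rw [List.getD_append _ _ _ _ (key i hi)]
      simp [key i hi]
    · refine Finset.sum_congr rfl fun i hi => ?_
      rw [List.getD_append_right _ _ _ _ (by omega)]
      simp

lemma Cov.zero {m : ℕ} (L : List (Fin m → ℝ)) : Cov L 0 0 :=
  ⟨fun _ => 0, by simp, by simp⟩

lemma Cov.mono {m : ℕ} {L : List (Fin m → ℝ)} {θ θ' : ℝ} {x : Fin m → ℝ}
    (h : Cov L θ x) (hle : θ ≤ θ') : Cov L θ' x := by
  obtain ⟨y, hy, hy'⟩ := h
  exact ⟨y, hy.trans hle, hy'⟩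

lemma Cov.append_right {m : ℕ} {L : List (Fin m → ℝ)} {θ : ℝ} {x : Fin m → ℝ}
    (h : Cov L θ x) (W : List (Fin m → ℝ)) : Cov (L ++ W) θ x := by
  simpa using h.append (Cov.zero W)

lemma Cov.append_left {m : ℕ} {L : List (Fin m → ℝ)} {θ : ℝ} {x : Fin m → ℝ}
    (h : Cov L θ x) (W : List (Fin m → ℝ)) : Cov (W ++ L) θ x := by
  simpa using (Cov.zero W).append h

lemma Cov.map_smul {m : ℕ} {L : List (Fin m → ℝ)} {θ : ℝ} {x : Fin m → ℝ}
    (h : Cov L θ x) (c : ℝ) : Cov (L.map (fun w => c • w)) θ (c • x) := by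
  obtain ⟨y, hy, hy'⟩ := h
  refine ⟨y, by simpa using hy, fun t => ?_⟩
  rw [List.length_map, Pi.smul_apply, ← hy' t, smul_eq_mul, Finset.mul_sum]
  refine Finset.sum_congr rfl fun i hi => ?_
  have hi' := Finset.mem_range.1 hi
  simp [List.getD_eq_getElem?_getD, hi', mul_assoc]

/-- Scaling the columns up and the coefficients down. -/
lemma Cov.rescale {m : ℕ} {L : List (Fin m → ℝ)} {c : ℝ} (hc : 0 < c) {x : Fin m → ℝ}
    (h : Cov L (c ^ 2) x) : Cov (L.map (fun w => c • w)) 1 x := by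
  obtain ⟨y, hy, hy'⟩ := h
  refine ⟨fun i => c⁻¹ * y i, ?_, fun t => ?_⟩
  · simp only [mul_pow, List.length_map]
    rw [← Finset.mul_sum, inv_pow, inv_mul_le_iff₀ (by positivity)]
    simpa using hy
  · rw [List.length_map, ← hy' t]
    refine Finset.sum_congr rfl fun i hi => ?_
    have hi' := Finset.mem_range.1 hi
    simp only [List.getD_eq_getElem?_getD, List.getElem?_map, hi', List.getElem?_eq_getElem,
      Option.map_some, Option.getD_some, Pi.smul_apply, smul_eq_mul]
    field_simp

lemma Cov.sum {m : ℕ} {L : List (Fin m → ℝ)} {θ : ℝ} (n : ℕ) (x : ℕ → Fin m → ℝ)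
    (h : ∀ j < n, Cov L θ (x j)) : Cov L ((n : ℝ) ^ 2 * θ) (∑ j ∈ Finset.range n, x j) := by
  have h' : ∀ j, ∃ y : ℕ → ℝ, j < n → (∑ i ∈ Finset.range L.length, (y i) ^ 2 ≤ θ ∧
    ∀ t, ∑ i ∈ Finset.range L.length, (L.getD i 0) t * y i = x j t) := by
    intro j
    by_cases hj : j < n
    · obtain ⟨y, hy⟩ := h j hj
      exact ⟨y, fun _ => hy⟩
    · exact ⟨0, fun h => absurd h hj⟩
  choose y hy using h'
  refine ⟨fun i => ∑ j ∈ Finset.range n, y j i, ?_, fun t => ?_⟩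
  · calc ∑ i ∈ Finset.range L.length, (∑ j ∈ Finset.range n, y j i) ^ 2
        ≤ ∑ i ∈ Finset.range L.length, (n : ℝ) * ∑ j ∈ Finset.range n, (y j i) ^ 2 := by
          refine Finset.sum_le_sum fun i _ => ?_
          simpa using sq_sum_le_card_mul_sum_sq (s := Finset.range n) (f := fun j => y j i)
      _ = (n : ℝ) * ∑ j ∈ Finset.range n, ∑ i ∈ Finset.range L.length, (y j i) ^ 2 := by
          rw [← Finset.mul_sum, Finset.sum_comm]
      _ ≤ (n : ℝ) * ∑ j ∈ Finset.range n, θ := by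
          gcongr with j hj
          exact (hy j (Finset.mem_range.1 hj)).1
      _ = (n : ℝ) ^ 2 * θ := by simp; ring
  · rw [Finset.sum_apply]
    simp only [Finset.mul_sum]
    rw [Finset.sum_comm]
    exact Finset.sum_congr rfl fun j hj => (hy j (Finset.mem_range.1 hj)).2 t

lemma wn_mono {m : ℕ} {p q : Fin m → ℝ} (h : ∀ i, p i ≤ q i) (x : Fin m → ℝ) :
    wn p x ≤ wn q x :=
  Finset.sum_le_sum fun i _ => mul_le_mul_of_nonneg_right (h i) (sq_nonneg _)

lemma wn_nonneg {m : ℕ} {p : Fin m → ℝ} (h : ∀ i, 1 ≤ p i) (x : Fin m → ℝ) :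
    0 ≤ wn p x :=
  Finset.sum_nonneg fun i _ => mul_nonneg (zero_le_one.trans (h i)) (sq_nonneg _)

lemma wn_sub_le {m : ℕ} {p : Fin m → ℝ} (h : ∀ i, 1 ≤ p i) (x y : Fin m → ℝ) :
    wn p (x - y) ≤ 2 * (wn p x + wn p y) := by
  unfold wn
  rw [← Finset.sum_add_distrib, Finset.mul_sum]
  refine Finset.sum_le_sum fun i _ => ?_
  have := h i
  simp only [Pi.sub_apply]
  nlinarith [mul_nonneg (zero_le_one.trans this) (sq_nonneg (x i + y i))]

lemma exists_proj {m : ℕ} (p : Fin m → ℝ) (hp : ∀ i, 1 ≤ p i) (V : Submodule ℝ (Fin m → ℝ))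
    (a : Fin m → ℝ) : ∃ v ∈ V, ∀ z ∈ V, ∑ i, p i * (z i) * (a i - v i) = 0 := by
  let T : (Fin m → ℝ) →ₗ[ℝ] EuclideanSpace ℝ (Fin m) :=
    { toFun := fun x => WithLp.toLp 2 (fun i => Real.sqrt (p i) * x i)
      map_add' := by intro x y; ext i; simp [mul_add]
      map_smul' := by intro c x; ext i; simp; ring }
  obtain ⟨w, hw, hw'⟩ : ∃ w ∈ V.map T, ∀ z ∈ V.map T, inner ℝ (T a - w) z = 0 :=
    ⟨(V.map T).starProjection (T a), Submodule.starProjection_apply_mem _ _,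
      fun z hz => Submodule.starProjection_inner_eq_zero _ z hz⟩
  obtain ⟨v, hv, rfl⟩ := hw
  refine ⟨v, hv, fun z hz => ?_⟩
  have := hw' (T z) ⟨z, hz, rfl⟩
  rw [← this, ← map_sub]
  simp only [T, LinearMap.coe_mk, AddHom.coe_mk, PiLp.inner_apply]
  refine Finset.sum_congr rfl fun i _ => ?_
  have h1 : Real.sqrt (p i) * Real.sqrt (p i) = p i :=
    Real.mul_self_sqrt (zero_le_one.trans (hp i))
  simp
  linear_combination (-(z i) * (a i - v i)) * h1

lemma wn_add {m : ℕ} (p x y : Fin m → ℝ) :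
    wn p (x + y) = wn p x + 2 * (∑ i, p i * x i * y i) + wn p y := by
  unfold wn
  rw [Finset.mul_sum, ← Finset.sum_add_distrib, ← Finset.sum_add_distrib]
  exact Finset.sum_congr rfl fun i _ => by simp only [Pi.add_apply]; ring

lemma wn_smul {m : ℕ} (p x : Fin m → ℝ) (c : ℝ) : wn p (c • x) = c ^ 2 * wn p x := by
  unfold wn
  rw [Finset.mul_sum]
  exact Finset.sum_congr rfl fun i _ => by simp only [Pi.smul_apply, smul_eq_mul]; ring

lemma wn_pos {m : ℕ} {p : Fin m → ℝ} (h : ∀ i, 1 ≤ p i) {x : Fin m → ℝ} (hx : x ≠ 0) :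
    0 < wn p x := by
  obtain ⟨i, hi⟩ := Function.ne_iff.1 hx
  refine Finset.sum_pos' (fun i _ => mul_nonneg (zero_le_one.trans (h i)) (sq_nonneg _))
    ⟨i, Finset.mem_univ i, ?_⟩
  exact mul_pos (zero_lt_one.trans_le (h i)) (by simpa using pow_pos (abs_pos.2 hi) 2)

lemma exists_unit {m : ℕ} (p : Fin m → ℝ) (hp : ∀ i, 1 ≤ p i) (V : Submodule ℝ (Fin m → ℝ))
    (a : Fin m → ℝ) (ha : a ∉ V) :
    ∃ u : Fin m → ℝ, wn p u = 1 ∧ ∀ x ∈ V ⊔ Submodule.span ℝ {a},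
      ∃ y : ℝ, ∃ x' ∈ V, x = x' + y • u ∧ y ^ 2 + wn p x' = wn p x := by
  obtain ⟨v, hv, hort⟩ := exists_proj p hp V a
  have hb : a - v ≠ 0 := fun h => ha (by rw [sub_eq_zero.1 h]; exact hv)
  have hpos := wn_pos hp hb
  set c := Real.sqrt (wn p (a - v)) with hc
  have hc0 : 0 < c := Real.sqrt_pos.2 hpos
  have hc2 : c ^ 2 = wn p (a - v) := Real.sq_sqrt hpos.le
  have hu : wn p (c⁻¹ • (a - v)) = 1 := by
    rw [wn_smul, ← hc2]; field_simp
  refine ⟨c⁻¹ • (a - v), hu, fun x hx => ?_⟩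
  obtain ⟨v0, hv0, w, hw, rfl⟩ := Submodule.mem_sup.1 hx
  obtain ⟨t, rfl⟩ := Submodule.mem_span_singleton.1 hw
  have hx' : v0 + t • v ∈ V := V.add_mem hv0 (V.smul_mem t hv)
  have heq : v0 + t • a = (v0 + t • v) + (t * c) • c⁻¹ • (a - v) := by
    rw [smul_smul, mul_assoc, mul_inv_cancel₀ hc0.ne', mul_one, smul_sub]; abel
  refine ⟨t * c, v0 + t • v, hx', heq, ?_⟩
  rw [heq, wn_add p (v0 + t • v), wn_smul p (c⁻¹ • (a - v)), hu]
  have h0 := hort _ hx'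
  have : ∑ i, p i * (v0 + t • v) i * ((t * c) • c⁻¹ • (a - v)) i = 0 := by
    have : ∀ i, p i * (v0 + t • v) i * ((t * c) • c⁻¹ • (a - v)) i
        = (t * c * c⁻¹) * (p i * (v0 + t • v) i * (a i - v i)) := by
      intro i; simp only [Pi.smul_apply, Pi.sub_apply, smul_eq_mul]; ring
    rw [Finset.sum_congr rfl fun i _ => this i, ← Finset.mul_sum, h0, mul_zero]
  rw [this]; ring

lemma le_logb_one_add {x : ℝ} (h0 : 0 ≤ x) (h1 : x ≤ 1) : x ≤ Real.logb 2 (1 + x) := by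
  rw [Real.le_logb_iff_rpow_le (by norm_num) (by linarith)]
  have := rpow_one_add_le_one_add_mul_self (s := 1) (by norm_num) h0 h1
  norm_num at this
  linarith

lemma add_step {m : ℕ} (p : Fin m → ℝ) (hp : ∀ i, 1 ≤ p i) (V : Submodule ℝ (Fin m → ℝ))
    (a : Fin m → ℝ) (ha : a ∉ V) (s η : ℝ) (hs : 0 < s) (hη : 0 < η) :
    ∃ (W : List (Fin m → ℝ)) (p' : Fin m → ℝ), (∀ i, p i ≤ p' i) ∧
      ∑ i, p' i = ∑ i, p i + η * s ∧
      (∀ i, η * rowsq W i ≤ Real.logb 2 (p' i) - Real.logb 2 (p i)) ∧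
      ∀ x ∈ V ⊔ Submodule.span ℝ {a}, ∃ x' ∈ V, ∃ θ : ℝ,
        Cov W θ (x - x') ∧ θ + wn p x' / s ≤ wn p' x / s := by
  have hex := fun q : {q : Fin m → ℝ // ∀ i, 1 ≤ q i} => exists_unit q.1 q.2 V a ha
  choose U hU1 hU2 using hex
  obtain ⟨n, hn⟩ := exists_nat_gt (η * s)
  have hn0 : (0 : ℝ) < n := lt_trans (by positivity) hn
  have hn0' : n ≠ 0 := by rintro rfl; simp at hn0
  have hfac : ∀ (q : {q : Fin m → ℝ // ∀ i, 1 ≤ q i}) i, 0 ≤ η * (s / n) * (U q i) ^ 2 :=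
    fun q i => by positivity
  let nxt : {q : Fin m → ℝ // ∀ i, 1 ≤ q i} → {q : Fin m → ℝ // ∀ i, 1 ≤ q i} := fun q =>
    ⟨fun i => q.1 i * (1 + η * (s / n) * (U q i) ^ 2), fun i => by
      have := hfac q i
      have h1 := q.2 i
      nlinarith⟩
  let Q : ℕ → {q : Fin m → ℝ // ∀ i, 1 ≤ q i} := fun k => nxt^[k] ⟨p, hp⟩
  have hQ0 : (Q 0).1 = p := rfl
  have hQs : ∀ k i, (Q (k + 1)).1 i = (Q k).1 i * (1 + η * (s / n) * (U (Q k) i) ^ 2) := by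
    intro k i
    simp only [Q, Function.iterate_succ_apply']
    rfl
  have hQm1 : ∀ i, Monotone fun k => (Q k).1 i := by
    intro i
    refine monotone_nat_of_le_succ fun k => ?_
    rw [hQs]
    have := hfac (Q k) i
    have h1 := (Q k).2 i
    nlinarith
  have hpQ : ∀ k i, p i ≤ (Q k).1 i := fun k i => hQm1 i (Nat.zero_le k)
  have hsum : ∀ k : ℕ, ∑ i, (Q k).1 i = ∑ i, p i + k * (η * (s / n)) := by
    intro k
    induction k with
    | zero => simp [hQ0]
    | succ k ih =>
      have h1 := hU1 (Q k)
      unfold wn at h1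
      have : ∑ i, (Q (k + 1)).1 i = ∑ i, (Q k).1 i
          + η * (s / n) * ∑ i, (Q k).1 i * (U (Q k) i) ^ 2 := by
        rw [Finset.mul_sum, ← Finset.sum_add_distrib]
        exact Finset.sum_congr rfl fun i _ => by rw [hQs]; ring
      rw [this, h1, ih]; push_cast; ring
  have hlog : ∀ i, ∀ k : ℕ, ∑ j ∈ Finset.range k, η * (s / n) * (U (Q j) i) ^ 2
      ≤ Real.logb 2 ((Q k).1 i) - Real.logb 2 (p i) := by
    intro i k
    induction k with
    | zero => simp [hQ0]
    | succ k ih =>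
      rw [Finset.sum_range_succ, hQs]
      have h1 := (Q k).2 i
      have hf := hfac (Q k) i
      rw [Real.logb_mul (by linarith) (by linarith)]
      have hle : (U (Q k) i) ^ 2 ≤ 1 := by
        have h2 : (Q k).1 i * (U (Q k) i) ^ 2 ≤ wn (Q k).1 (U (Q k)) :=
          Finset.single_le_sum (f := fun i => (Q k).1 i * (U (Q k) i) ^ 2)
            (fun i _ => mul_nonneg (zero_le_one.trans ((Q k).2 i)) (sq_nonneg _))
            (Finset.mem_univ i)
        rw [hU1] at h2
        nlinarith [sq_nonneg (U (Q k) i)]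
      have hηs : η * (s / n) ≤ 1 := by
        rw [← mul_div_assoc, div_le_one hn0]; exact hn.le
      have h3 : η * (s / n) * (U (Q k) i) ^ 2 ≤ 1 := by
        have : 0 ≤ η * (s / n) := by positivity
        nlinarith [sq_nonneg (U (Q k) i)]
      have := le_logb_one_add hf h3
      linarith
  let W : List (Fin m → ℝ) := (List.range n).map fun k => Real.sqrt (s / n) • U (Q k)
  have hWl : W.length = n := by simp [W]
  have hWg : ∀ k < n, W.getD k 0 = Real.sqrt (s / n) • U (Q k) := by
    intro k hk
    simp [W, List.getD_eq_getElem?_getD, hk]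
  have hsn : 0 < s / n := by positivity
  have hsq : Real.sqrt (s / n) ^ 2 = s / n := Real.sq_sqrt hsn.le
  have hsq0 : 0 < Real.sqrt (s / n) := Real.sqrt_pos.2 hsn
  refine ⟨W, (Q n).1, hpQ n, ?_, fun i => ?_, fun x hx => ?_⟩
  · rw [hsum]; field_simp
  · refine le_trans (le_of_eq ?_) (hlog i n)
    unfold rowsq
    rw [hWl, Finset.mul_sum]
    refine Finset.sum_congr rfl fun k hk => ?_
    rw [hWg k (Finset.mem_range.1 hk)]
    simp only [Pi.smul_apply, smul_eq_mul, mul_pow, hsq]; ring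
  · have := fun k => hU2 (Q k) x hx
    choose y x' hx'V hxeq hxn using this
    refine ⟨(n : ℝ)⁻¹ • ∑ k ∈ Finset.range n, x' k,
      V.smul_mem _ (V.sum_mem fun k _ => hx'V k),
      ∑ k ∈ Finset.range n, (y k) ^ 2 / (n * s), ⟨fun k => y k / n / Real.sqrt (s / n), ?_, ?_⟩, ?_⟩
    · rw [hWl]
      refine le_of_eq (Finset.sum_congr rfl fun k hk => ?_)
      rw [div_pow, hsq]; field_simp
    · intro t
      rw [hWl]
      have h1 : ∀ k ∈ Finset.range n, W.getD k 0 t * (y k / n / Real.sqrt (s / n))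
          = (n : ℝ)⁻¹ * (x t - x' k t) := by
        intro k hk
        rw [hWg k (Finset.mem_range.1 hk)]
        have : x t = x' k t + y k * U (Q k) t := by
          conv_lhs => rw [hxeq k]
          simp
        rw [this]
        simp only [Pi.smul_apply, smul_eq_mul]
        field_simp
        ring
      rw [Finset.sum_congr rfl h1, ← Finset.mul_sum, Finset.sum_sub_distrib]
      simp only [Finset.sum_const, Finset.card_range, nsmul_eq_mul, Pi.sub_apply, Pi.smul_apply,
        Finset.sum_apply, smul_eq_mul]
      field_simp
    · have hA : wn p ((n : ℝ)⁻¹ • ∑ k ∈ Finset.range n, x' k)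
          ≤ (n : ℝ)⁻¹ * ∑ k ∈ Finset.range n, wn (Q k).1 (x' k) := by
        calc wn p ((n : ℝ)⁻¹ • ∑ k ∈ Finset.range n, x' k)
            ≤ (n : ℝ)⁻¹ * ∑ k ∈ Finset.range n, wn p (x' k) := by
              rw [wn_smul]
              unfold wn
              rw [Finset.sum_comm, Finset.mul_sum, Finset.mul_sum]
              refine Finset.sum_le_sum fun i _ => ?_
              rw [← Finset.mul_sum, Finset.sum_apply]
              have h2 := sq_sum_le_card_mul_sum_sq (s := Finset.range n) (f := fun k => x' k i)
              rw [Finset.card_range] at h2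
              have h3 := hp i
              calc ((n : ℝ)⁻¹) ^ 2 * (p i * (∑ k ∈ Finset.range n, x' k i) ^ 2)
                  ≤ ((n : ℝ)⁻¹) ^ 2 * (p i * (n * ∑ k ∈ Finset.range n, (x' k i) ^ 2)) := by
                    have : 0 ≤ p i := by linarith
                    gcongr
                _ = _ := by field_simp
          _ ≤ _ := by
              gcongr with k hk
              exact wn_mono (hpQ k) _
      have hB : ∀ k ∈ Finset.range n, (y k) ^ 2 + wn (Q k).1 (x' k) ≤ wn (Q n).1 x := by
        intro k hk
        rw [hxn k]
        exact wn_mono (fun i => hQm1 i (Finset.mem_range.1 hk).le) _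
      have hC := Finset.sum_le_sum hB
      rw [Finset.sum_add_distrib] at hC
      simp only [Finset.sum_const, Finset.card_range, nsmul_eq_mul] at hC
      rw [← Finset.sum_div]
      set Y := ∑ k ∈ Finset.range n, (y k) ^ 2
      set X := ∑ k ∈ Finset.range n, wn (Q k).1 (x' k)
      have : Y / (n * s) + (n : ℝ)⁻¹ * X / s ≤ wn (Q n).1 x / s := by
        rw [show Y / (n * s) + (n : ℝ)⁻¹ * X / s = ((Y + X) / n) / s by field_simp]
        gcongr
        rw [div_le_iff₀ hn0]; linarith
      refine le_trans ?_ this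
      gcongr

/-- The basic invariants of the online algorithm. -/
structure Basic {m : ℕ} (η : ℝ) (L : List (Fin m → ℝ)) (p : Fin m → ℝ)
    (V : ℕ → Submodule ℝ (Fin m → ℝ)) : Prop where
  one_le : ∀ i, 1 ≤ p i
  anti : ∀ j, V (j + 1) ≤ V j
  row : ∀ i, η * rowsq L i ≤ η + Real.logb 2 (p i)
  ident : ∀ x : Fin m → ℝ, ∑ i, (x i) ^ 2 ≤ 1 → Cov L 1 x
  cov : ∀ j θ, ∀ x ∈ V j, wn p x ≤ 2 ^ j * θ → Cov L θ x

lemma Basic.add {m : ℕ} {η : ℝ} (hη : 0 < η) {L : List (Fin m → ℝ)} {p : Fin m → ℝ}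
    {V : ℕ → Submodule ℝ (Fin m → ℝ)} (h : Basic η L p V) (i : ℕ) (a : Fin m → ℝ)
    (hprev : ∀ i', i = i' + 1 → a ∈ V i') :
    ∃ W p' V', Basic η (L ++ W) p' V' ∧ (∀ t, p t ≤ p' t) ∧ ∑ t, p' t ≤ ∑ t, p t + η * 2 ^ i ∧
      (∀ j, V j ≤ V' j) ∧ a ∈ V' i := by
  by_cases ha : a ∈ V i
  · refine ⟨[], p, V, by simpa using h, fun _ => le_rfl, ?_, fun _ => le_rfl, ha⟩
    have : 0 ≤ η * 2 ^ i := by positivity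
    linarith
  obtain ⟨W, p', hpp, hsum, hrow, hcov⟩ :=
    add_step p h.one_le (V i) a ha (2 ^ i) η (by positivity) hη
  refine ⟨W, p', Function.update V i (V i ⊔ Submodule.span ℝ {a}), ⟨?_, ?_, ?_, ?_, ?_⟩, hpp,
    hsum.le, ?_, ?_⟩
  · exact fun t => (h.one_le t).trans (hpp t)
  · intro j
    by_cases h1 : j + 1 = i
    · subst h1
      rw [Function.update_self, Function.update_of_ne (by omega)]
      exact sup_le (h.anti j) ((Submodule.span_singleton_le_iff_mem _ _).2 (hprev j rfl))
    · rw [Function.update_of_ne h1]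
      by_cases h2 : j = i
      · subst h2
        rw [Function.update_self]
        exact (h.anti j).trans le_sup_left
      · rw [Function.update_of_ne h2]
        exact h.anti j
  · intro t
    rw [rowsq_append]
    have := h.row t
    have := hrow t
    linarith
  · exact fun x hx => (h.ident x hx).append_right W
  · intro j θ x hx hw
    by_cases h2 : j = i
    · subst h2
      rw [Function.update_self] at hx
      obtain ⟨x', hx', θ', hc, hle⟩ := hcov x hx
      have h1 : Cov L (wn p x' / 2 ^ j) x' := h.cov j _ x' hx' (by field_simp; exact le_rfl)
      have h3 := h1.append hc
      rw [add_sub_cancel] at h3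
      refine h3.mono ?_
      have : wn p' x / 2 ^ j ≤ θ := by rw [div_le_iff₀ (by positivity)]; linarith
      linarith
    · rw [Function.update_of_ne h2] at hx
      exact (h.cov j θ x hx ((wn_mono hpp x).trans hw)).append_right W
  · intro j
    by_cases h2 : j = i
    · subst h2
      rw [Function.update_self]; exact le_sup_left
    · rw [Function.update_of_ne h2]
  · rw [Function.update_self]
    exact Submodule.mem_sup_right (Submodule.mem_span_singleton_self a)

lemma Basic.trig {m : ℕ} {η : ℝ} (hη : 0 < η) {L : List (Fin m → ℝ)} {p : Fin m → ℝ}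
    {V : ℕ → Submodule ℝ (Fin m → ℝ)} (h : Basic η L p V) (a : Fin m → ℝ) (i : ℕ) :
    ∃ W p' V', Basic η (L ++ W) p' V' ∧ (∀ t, p t ≤ p' t) ∧
      ∑ t, p' t ≤ ∑ t, p t + η * (2 ^ i - 1) ∧
      (∀ j, V j ≤ V' j) ∧ ∀ i' < i, a ∈ V' i' := by
  induction i with
  | zero => exact ⟨[], p, V, by simpa using h, fun _ => le_rfl, by simp, fun _ => le_rfl, by simp⟩
  | succ i ih =>
    obtain ⟨W, p', V', hb, hp, hs, hV, ha⟩ := ih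
    obtain ⟨W2, p2, V2, hb2, hp2, hs2, hV2, ha2⟩ := hb.add hη i a (fun i' hi' => ha i' (by omega))
    refine ⟨W ++ W2, p2, V2, by simpa [List.append_assoc] using hb2,
      fun t => (hp t).trans (hp2 t), ?_, fun j => (hV j).trans (hV2 j), ?_⟩
    · rw [pow_succ]; linarith
    · intro i' hi'
      rcases Nat.lt_succ_iff_lt_or_eq.1 hi' with h1 | rfl
      · exact hV2 _ (ha _ h1)
      · exact ha2

/-- `a` is in the ellipsoid of the matrix `M`. -/
def InE {m n : ℕ} (M : Fin m → Fin n → ℝ) (a : Fin m → ℝ) : Prop :=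
  ∃ y : Fin n → ℝ, ∑ l, (y l) ^ 2 ≤ 1 ∧ ∀ i, ∑ l, M i l * y l = a i

/-- States of the online algorithm with known bound on the factorization norm. -/
structure St (m : ℕ) (η : ℝ) (J : ℕ) where
  L : List (Fin m → ℝ)
  p : Fin m → ℝ
  V : ℕ → Submodule ℝ (Fin m → ℝ)
  k : ℕ → ℕ
  hist : List (Fin m → ℝ)
  basic : Basic η L p V
  tot : ∑ i, p i ≤ m + η * ∑ j ∈ Finset.range (J + 1), (k j : ℝ) * 2 ^ (j + 1)
  count : ∀ (j n : ℕ) (M : Fin m → Fin n → ℝ) (q : Fin m → ℝ), (∀ i, p i ≤ q i) →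
    (∀ a ∈ hist, InE M a) →
    ∃ c : Fin n → Fin m → ℝ, (∀ l, c l ∈ V j) ∧
      ∑ l, wn q ((fun i => M i l) - c l) ≤ ∑ l, wn q (fun i => M i l) - k j * 2 ^ j

lemma count_step {m n : ℕ} (M : Fin m → Fin n → ℝ) (q : Fin m → ℝ)
    (V V' : Submodule ℝ (Fin m → ℝ)) (hV : V ≤ V') (a : Fin m → ℝ) (ha : a ∈ V') (hM : InE M a)
    (s : ℝ) (hs : 0 < s) (hfar : ∀ v ∈ V, s < wn q (a - v)) (B : ℝ) (c : Fin n → Fin m → ℝ)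
    (hc : ∀ l, c l ∈ V) (hB : ∑ l, wn q ((fun i => M i l) - c l) ≤ B) :
    ∃ c' : Fin n → Fin m → ℝ, (∀ l, c' l ∈ V') ∧
      ∑ l, wn q ((fun i => M i l) - c' l) ≤ B - s := by
  obtain ⟨y, hy, hya⟩ := hM
  set v : Fin m → ℝ := ∑ l, y l • c l with hv
  have hvV : v ∈ V := V.sum_mem fun l _ => V.smul_mem _ (hc l)
  have hb := hfar v hvV
  refine ⟨fun l => c l + y l • (a - v), fun l => V'.add_mem (hV (hc l))
    (V'.smul_mem _ (V'.sub_mem ha (hV hvV))), ?_⟩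
  have hbi : ∀ i, (a - v) i = ∑ l, y l * (M i l - c l i) := by
    intro i
    simp only [Pi.sub_apply, hv, Finset.sum_apply, Pi.smul_apply, smul_eq_mul, ← hya i]
    rw [← Finset.sum_sub_distrib]
    exact Finset.sum_congr rfl fun l _ => by ring
  have key : ∑ l, wn q ((fun i => M i l) - (c l + y l • (a - v)))
      = ∑ l, wn q ((fun i => M i l) - c l) - 2 * wn q (a - v) + (∑ l, (y l) ^ 2) * wn q (a - v) := by
    have e1 : ∀ l, wn q ((fun i => M i l) - (c l + y l • (a - v)))
        = wn q ((fun i => M i l) - c l)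
          - 2 * ∑ i, q i * (a - v) i * (y l * (M i l - c l i)) + (y l) ^ 2 * wn q (a - v) := by
      intro l
      unfold wn
      rw [Finset.mul_sum, Finset.mul_sum, ← Finset.sum_sub_distrib, ← Finset.sum_add_distrib]
      refine Finset.sum_congr rfl fun i _ => ?_
      simp only [Pi.sub_apply, Pi.add_apply, Pi.smul_apply, smul_eq_mul]
      ring
    rw [Finset.sum_congr rfl fun l _ => e1 l, Finset.sum_add_distrib, Finset.sum_sub_distrib,
      ← Finset.mul_sum, ← Finset.sum_mul, Finset.sum_comm]
    congr 3
    unfold wn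
    refine Finset.sum_congr rfl fun i _ => ?_
    rw [← Finset.mul_sum, ← hbi i]; ring
  rw [key]
  nlinarith

/-- Condition that the scale `j` handles the vector `a`. -/
def St.Ok {m : ℕ} {η : ℝ} {J : ℕ} (S : St m η J) (a : Fin m → ℝ) (j : ℕ) : Prop :=
  ∃ v ∈ S.V j, wn S.p (a - v) ≤ 2 ^ j

lemma St.stage {m : ℕ} {η : ℝ} {J : ℕ} (hη : 0 < η) (S : St m η J) (a : Fin m → ℝ)
    (ha : a ∈ S.hist) (j : ℕ) (hj : j ≤ J) (hok : ∀ i < j, S.Ok a i) :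
    ∃ S' : St m η J, (∃ W, S'.L = S.L ++ W) ∧ S'.hist = S.hist ∧ ∀ i < j + 1, S'.Ok a i := by
  by_cases h : S.Ok a j
  · refine ⟨S, ⟨[], by simp⟩, rfl, fun i hi => ?_⟩
    rcases Nat.lt_succ_iff_lt_or_eq.1 hi with h1 | rfl
    · exact hok i h1
    · exact h
  have hfar : ∀ v ∈ S.V j, (2 : ℝ) ^ j < wn S.p (a - v) := by
    intro v hv
    by_contra hcon
    exact h ⟨v, hv, not_lt.1 hcon⟩
  obtain ⟨W, p', V', hb, hp, hs, hV, haV⟩ := S.basic.trig hη a (j + 1)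
  refine ⟨⟨S.L ++ W, p', V', Function.update S.k j (S.k j + 1), S.hist, hb, ?_, ?_⟩, ⟨W, rfl⟩, rfl,
    fun i hi => ⟨a, haV i hi, ?_⟩⟩
  · have h1 : ∑ i ∈ Finset.range (J + 1), ((Function.update S.k j (S.k j + 1) i : ℕ) : ℝ) * 2 ^ (i + 1)
        = ∑ i ∈ Finset.range (J + 1), (S.k i : ℝ) * 2 ^ (i + 1) + 2 ^ (j + 1) := by
      have hmem : j ∈ Finset.range (J + 1) := Finset.mem_range.2 (by omega)
      rw [← Finset.add_sum_erase _ _ hmem, ← Finset.add_sum_erase _ _ hmem, Function.update_self]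
      have : ∑ i ∈ (Finset.range (J + 1)).erase j,
          ((Function.update S.k j (S.k j + 1) i : ℕ) : ℝ) * 2 ^ (i + 1)
          = ∑ i ∈ (Finset.range (J + 1)).erase j, (S.k i : ℝ) * 2 ^ (i + 1) :=
        Finset.sum_congr rfl fun i hi => by
          rw [Function.update_of_ne (Finset.ne_of_mem_erase hi)]
      rw [this]; push_cast; ring
    rw [h1]
    have := S.tot
    linarith
  · intro i n M q hq hM
    obtain ⟨c, hc, hcs⟩ := S.count i n M q (fun t => (hp t).trans (hq t)) hM
    by_cases hij : i = j
    · subst hij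
      rw [Function.update_self]
      obtain ⟨c', hc', hcs'⟩ := count_step M q (S.V i) (V' i) (hV i) a (haV i (by omega)) (hM a ha)
        (2 ^ i) (by positivity)
        (fun v hv => (hfar v hv).trans_le (wn_mono (fun t => (hp t).trans (hq t)) _)) _ c hc hcs
      refine ⟨c', hc', hcs'.trans (le_of_eq ?_)⟩
      push_cast; ring
    · rw [Function.update_of_ne hij]
      exact ⟨c, fun l => hV i (hc l), hcs⟩
  · simp [wn]

lemma St.step {m : ℕ} {η : ℝ} {J : ℕ} (hη : 0 < η) (S : St m η J) (a : Fin m → ℝ) :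
    ∃ S' : St m η J, (∃ W, S'.L = S.L ++ W) ∧ S'.hist = S.hist ++ [a] ∧
      ∀ i < J + 1, S'.Ok a i := by
  have main : ∀ j ≤ J + 1, ∃ S' : St m η J, (∃ W, S'.L = S.L ++ W) ∧ S'.hist = S.hist ++ [a] ∧
      ∀ i < j, S'.Ok a i := by
    intro j
    induction j with
    | zero =>
      intro _
      exact ⟨⟨S.L, S.p, S.V, S.k, S.hist ++ [a], S.basic, S.tot, fun j n M q hq hM =>
        S.count j n M q hq fun b hb => hM b (List.mem_append_left _ hb)⟩, ⟨[], by simp⟩, rfl,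
        by simp⟩
    | succ j ih =>
      intro hj
      obtain ⟨S1, ⟨W1, hW1⟩, hh1, hok1⟩ := ih (by omega)
      obtain ⟨S2, ⟨W2, hW2⟩, hh2, hok2⟩ := S1.stage hη a (by simp [hh1]) j (by omega) hok1
      exact ⟨S2, ⟨W1 ++ W2, by rw [hW2, hW1, List.append_assoc]⟩, by rw [hh2, hh1], hok2⟩
  exact main (J + 1) le_rfl

lemma St.init (m : ℕ) (η : ℝ) (J : ℕ) : ∃ S : St m η J, S.hist = [] := by
  refine ⟨⟨List.ofFn (fun i : Fin m => Pi.single i (1 : ℝ)), fun _ => 1, fun _ => ⊥, fun _ => 0, [],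
    ⟨fun _ => le_rfl, fun _ => le_rfl, ?_, ?_, ?_⟩, by simp, ?_⟩, rfl⟩
  · intro i
    have : rowsq (List.ofFn (fun i : Fin m => (Pi.single i (1 : ℝ) : Fin m → ℝ))) i = 1 := by
      unfold rowsq
      rw [List.length_ofFn, Finset.sum_range]
      simp [Pi.single_apply]
    rw [this]; simp
  · intro x hx
    refine ⟨fun i => if h : i < m then x ⟨i, h⟩ else 0, ?_, fun t => ?_⟩
    · rw [List.length_ofFn, Finset.sum_range]
      simpa using hx
    · rw [List.length_ofFn, Finset.sum_range]
      simp [Pi.single_apply]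
  · intro j θ x hx hw
    rw [Submodule.mem_bot] at hx
    subst hx
    refine (Cov.zero _).mono ?_
    simp only [wn, Pi.zero_apply] at hw
    norm_num at hw
    exact hw
  · intro j n M q _ _
    exact ⟨fun _ => 0, by simp, by simp⟩

/-- All vectors of the list lie in an ellipsoid with rows of norm at most `g`. -/
def Feas {m : ℕ} (g : ℝ) (l : List (Fin m → ℝ)) : Prop :=
  ∃ (n : ℕ) (M : Fin m → Fin n → ℝ), (∀ i, ∑ j, (M i j) ^ 2 ≤ g ^ 2) ∧ ∀ a ∈ l, InE M a

lemma St.total_le {m : ℕ} {J : ℕ} (S : St m (1 / (4 * (J + 1))) J) (h : Feas 1 S.hist) :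
    ∑ i, S.p i ≤ 2 * m := by
  obtain ⟨n, M, hrow, hM⟩ := h
  have hk : ∀ j, (S.k j : ℝ) * 2 ^ j ≤ ∑ i, S.p i := by
    intro j
    obtain ⟨c, -, hc⟩ := S.count j n M S.p (fun _ => le_rfl) hM
    have h0 : 0 ≤ ∑ l, wn S.p ((fun i => M i l) - c l) :=
      Finset.sum_nonneg fun l _ => wn_nonneg S.basic.one_le _
    have h1 : ∑ l, wn S.p (fun i => M i l) ≤ ∑ i, S.p i := by
      unfold wn
      rw [Finset.sum_comm]
      refine Finset.sum_le_sum fun i _ => ?_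
      rw [← Finset.mul_sum]
      have := hrow i
      have := S.basic.one_le i
      nlinarith
    linarith
  have hsum : ∑ j ∈ Finset.range (J + 1), (S.k j : ℝ) * 2 ^ (j + 1)
      ≤ (J + 1) * (2 * ∑ i, S.p i) := by
    calc ∑ j ∈ Finset.range (J + 1), (S.k j : ℝ) * 2 ^ (j + 1)
        ≤ ∑ j ∈ Finset.range (J + 1), 2 * ∑ i, S.p i :=
          Finset.sum_le_sum fun j _ => by have := hk j; rw [pow_succ]; linarith
      _ = _ := by simp
  have ht := S.tot
  have hJ : (0 : ℝ) < J + 1 := by positivity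
  have h2 : 1 / (4 * ((J : ℝ) + 1)) * ∑ j ∈ Finset.range (J + 1), (S.k j : ℝ) * 2 ^ (j + 1)
      ≤ (∑ i, S.p i) / 2 := by
    calc _ ≤ 1 / (4 * ((J : ℝ) + 1)) * ((J + 1) * (2 * ∑ i, S.p i)) := by gcongr
      _ = _ := by field_simp; ring
  linarith

lemma St.rowsq_le {m : ℕ} {J : ℕ} (S : St m (1 / (4 * (J + 1))) J) (h : Feas 1 S.hist)
    (i : Fin m) : rowsq S.L i ≤ 1 + 4 * (J + 1) * Real.logb 2 (2 * m) := by
  have h1 := S.basic.row i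
  have hJ : (0 : ℝ) < J + 1 := by positivity
  have hp : S.p i ≤ 2 * m :=
    (Finset.single_le_sum (f := S.p) (fun i _ => zero_le_one.trans (S.basic.one_le i))
      (Finset.mem_univ i)).trans (S.total_le h)
  have hl : Real.logb 2 (S.p i) ≤ Real.logb 2 (2 * m) :=
    Real.logb_le_logb_of_le (by norm_num) (zero_lt_one.trans_le (S.basic.one_le i)) hp
  have h2 : rowsq S.L i ≤ 1 + 4 * (J + 1) * Real.logb 2 (S.p i) := by
    have h3 : 4 * ((J : ℝ) + 1) * (1 / (4 * (J + 1)) * rowsq S.L i)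
      ≤ 4 * ((J : ℝ) + 1) * (1 / (4 * (J + 1)) + Real.logb 2 (S.p i)) := by gcongr
    have e1 : 4 * ((J : ℝ) + 1) * (1 / (4 * (J + 1)) * rowsq S.L i) = rowsq S.L i := by field_simp
    have e2 : 4 * ((J : ℝ) + 1) * (1 / (4 * (J + 1)) + Real.logb 2 (S.p i))
      = 1 + 4 * (J + 1) * Real.logb 2 (S.p i) := by field_simp
    linarith
  refine h2.trans ?_
  gcongr

lemma St.cov {m : ℕ} {J : ℕ} (hJ : 2 * m ≤ 2 ^ J) (S : St m (1 / (4 * (J + 1))) J)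
    (h : Feas 1 S.hist) (a : Fin m → ℝ) (ha : a ∈ S.hist) (hok : ∀ i < J + 1, S.Ok a i) :
    Cov S.L ((3 * ((J : ℝ) + 2)) ^ 2) a := by
  have hJ' : (2 : ℝ) * m ≤ 2 ^ J := by exact_mod_cast hJ
  have hP := S.total_le h
  have ha1 : ∀ i, (a i) ^ 2 ≤ 1 := by
    obtain ⟨n, M, hrow, hM⟩ := h
    obtain ⟨y, hy, hya⟩ := hM a ha
    intro i
    rw [← hya i]
    refine (Finset.sum_mul_sq_le_sq_mul_sq _ _ _).trans ?_
    have := hrow i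
    have h0 : 0 ≤ ∑ l, (y l) ^ 2 := Finset.sum_nonneg fun _ _ => sq_nonneg _
    have h0' : 0 ≤ ∑ l, (M i l) ^ 2 := Finset.sum_nonneg fun _ _ => sq_nonneg _
    nlinarith
  have hpa : wn S.p a ≤ 2 ^ J := by
    refine le_trans ?_ (hP.trans hJ')
    refine Finset.sum_le_sum fun i _ => ?_
    have := ha1 i
    have := S.basic.one_le i
    nlinarith
  have hok' : ∀ j, ∃ v, j < J + 1 → (v ∈ S.V j ∧ wn S.p (a - v) ≤ 2 ^ j) := by
    intro j
    by_cases hj : j < J + 1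
    · obtain ⟨v, hv⟩ := hok j hj
      exact ⟨v, fun _ => hv⟩
    · exact ⟨0, fun h => absurd h hj⟩
  choose v hv using hok'
  -- pieces: differences of consecutive approximants
  have hmid : ∀ j < J, Cov S.L 9 (v j - v (j + 1)) := by
    intro j hj
    obtain ⟨h1, h2⟩ := hv j (by omega)
    obtain ⟨h3, h4⟩ := hv (j + 1) (by omega)
    refine S.basic.cov j 9 _ ((S.V j).sub_mem h1 (S.basic.anti j h3)) ?_
    have e : v j - v (j + 1) = (a - v (j + 1)) - (a - v j) := by abel
    rw [e]
    refine (wn_sub_le S.basic.one_le _ _).trans ?_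
    rw [pow_succ] at h4
    have : (0 : ℝ) < 2 ^ j := by positivity
    linarith
  have htop : Cov S.L 9 (v J) := by
    obtain ⟨h1, h2⟩ := hv J (by omega)
    refine S.basic.cov J 9 _ h1 ?_
    have e : v J = a - (a - v J) := by abel
    rw [e]
    refine (wn_sub_le S.basic.one_le _ _).trans ?_
    have : (0 : ℝ) < 2 ^ J := by positivity
    linarith
  have hbot : Cov S.L 9 (a - v 0) := by
    obtain ⟨h1, h2⟩ := hv 0 (by omega)
    refine (S.basic.ident _ ?_).mono (by norm_num)
    rw [pow_zero] at h2
    refine le_trans (Finset.sum_le_sum fun i _ => ?_) h2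
    have := S.basic.one_le i
    nlinarith [sq_nonneg ((a - v 0) i)]
  let x : ℕ → Fin m → ℝ := fun j => if j < J then v j - v (j + 1) else if j = J then v J else a - v 0
  have hx : ∀ j < J + 2, Cov S.L 9 (x j) := by
    intro j _
    by_cases h1 : j < J
    · simpa [x, h1] using hmid j h1
    · by_cases h2 : j = J
      · simpa [x, h2] using htop
      · simpa [x, h1, h2] using hbot
  have hsumx : ∑ j ∈ Finset.range (J + 2), x j = a := by
    rw [Finset.sum_range_succ, Finset.sum_range_succ]
    have h1 : ∑ j ∈ Finset.range J, x j = ∑ j ∈ Finset.range J, (v j - v (j + 1)) :=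
      Finset.sum_congr rfl fun j hj => by simp [x, Finset.mem_range.1 hj]
    rw [h1, Finset.sum_range_sub']
    simp [x]
  have := Cov.sum (J + 2) x hx
  rw [hsumx] at this
  refine this.mono (le_of_eq ?_)
  push_cast; ring

theorem core (m : ℕ) (hm : 1 ≤ m) : ∃ C : List (Fin m → ℝ) → List (Fin m → ℝ),
    (∀ l a, ∃ W, C (l ++ [a]) = C l ++ W) ∧
    (∀ l, Feas 1 l → ∀ i, rowsq (C l) i ≤ 1872 * (Real.logb 2 (2 * m)) ^ 4) ∧
    (∀ l a, Feas 1 (l ++ [a]) → Cov (C (l ++ [a])) 1 a) := by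
  let J := Nat.clog 2 (2 * m)
  have hJ : 2 * m ≤ 2 ^ J := Nat.le_pow_clog (by norm_num) _
  have hm' : (1 : ℝ) ≤ m := by exact_mod_cast hm
  set ℓ := Real.logb 2 (2 * m) with hℓ
  have hℓ1 : 1 ≤ ℓ := by
    rw [hℓ, Real.le_logb_iff_rpow_le (by norm_num) (by positivity)]
    norm_num; linarith
  have hJℓ : (J : ℝ) ≤ ℓ + 1 := by
    have h1 : 2 ^ (J - 1) < 2 * m := Nat.pow_pred_clog_lt_self (by norm_num) (by omega)
    have h2 : ((J - 1 : ℕ) : ℝ) ≤ ℓ := by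
      rw [hℓ, Real.le_logb_iff_rpow_le (by norm_num) (by positivity), Real.rpow_natCast]
      exact_mod_cast h1.le
    have h3 : (J : ℝ) ≤ ((J - 1 : ℕ) : ℝ) + 1 := by
      have : J ≤ (J - 1) + 1 := by omega
      exact_mod_cast this
    linarith
  have hη : (0 : ℝ) < 1 / (4 * (J + 1)) := by positivity
  obtain ⟨S0, hS0⟩ := St.init m (1 / (4 * (J + 1))) J
  choose nxt hn1 hn2 hn3 using fun (S : St m (1 / (4 * ((J : ℝ) + 1))) J) a => S.step hη a
  let st : List (Fin m → ℝ) → St m (1 / (4 * ((J : ℝ) + 1))) J := fun l => l.foldl nxt S0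
  have hst : ∀ l a, st (l ++ [a]) = nxt (st l) a := fun l a => by simp [st]
  have hhist : ∀ l, (st l).hist = l := by
    intro l
    induction l using List.reverseRecOn with
    | nil => exact hS0
    | append_singleton l a ih => rw [hst, hn2, ih]
  have hc : (0 : ℝ) < 3 * ((J : ℝ) + 2) := by positivity
  refine ⟨fun l => (st l).L.map (fun w => (3 * ((J : ℝ) + 2)) • w), fun l a => ?_,
    fun l hl i => ?_, fun l a hl => ?_⟩
  · obtain ⟨W, hW⟩ := hn1 (st l) a
    exact ⟨W.map (fun w => (3 * ((J : ℝ) + 2)) • w), by simp only [hst, hW, List.map_append]⟩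
  · simp only [rowsq_smul]
    have h1 := (st l).rowsq_le (by rw [hhist]; exact hl) i
    have h2 : 1 + 4 * ((J : ℝ) + 1) * ℓ ≤ 13 * ℓ ^ 2 := by nlinarith
    have h3 : (3 * ((J : ℝ) + 2)) ^ 2 ≤ 144 * ℓ ^ 2 := by
      have : 3 * ((J : ℝ) + 2) ≤ 12 * ℓ := by linarith
      calc (3 * ((J : ℝ) + 2)) ^ 2 ≤ (12 * ℓ) ^ 2 := by gcongr
        _ = _ := by ring
    calc (3 * ((J : ℝ) + 2)) ^ 2 * rowsq (st l).L i
        ≤ (3 * ((J : ℝ) + 2)) ^ 2 * (13 * ℓ ^ 2) := by gcongr; linarith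
      _ ≤ (144 * ℓ ^ 2) * (13 * ℓ ^ 2) := by gcongr
      _ = _ := by ring
  · refine Cov.rescale hc ?_
    refine (st (l ++ [a])).cov hJ (by rw [hhist]; exact hl) a (by rw [hhist]; simp) ?_
    rw [hst]
    exact hn3 _ _

lemma rowNorm_nonneg {α β : Type*} [Fintype α] [Fintype β] (M : Matrix α β ℝ) :
    0 ≤ rowNorm2inf M := Real.iSup_nonneg fun _ => Real.sqrt_nonneg _

lemma colNorm_nonneg {α β : Type*} [Fintype α] [Fintype β] (M : Matrix α β ℝ) :
    0 ≤ colNorm12 M := Real.iSup_nonneg fun _ => Real.sqrt_nonneg _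

lemma row_le {α β : Type*} [Fintype α] [Fintype β] (M : Matrix α β ℝ) (i : α) :
    ∑ j, (M i j) ^ 2 ≤ rowNorm2inf M ^ 2 := by
  have h : Real.sqrt (∑ j, (M i j) ^ 2) ≤ rowNorm2inf M :=
    le_ciSup (f := fun i => Real.sqrt (∑ j, (M i j) ^ 2)) (Set.finite_range _).bddAbove i
  exact (Real.sqrt_le_left (rowNorm_nonneg M)).1 h

lemma col_le {α β : Type*} [Fintype α] [Fintype β] (M : Matrix α β ℝ) (j : β) :
    ∑ i, (M i j) ^ 2 ≤ colNorm12 M ^ 2 := by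
  have h : Real.sqrt (∑ i, (M i j) ^ 2) ≤ colNorm12 M :=
    le_ciSup (f := fun j => Real.sqrt (∑ i, (M i j) ^ 2)) (Set.finite_range _).bddAbove j
  exact (Real.sqrt_le_left (colNorm_nonneg M)).1 h

/-- The set of values of factorizations. -/
def facs {m : ℕ} {β : Type*} [Fintype β] (A : Matrix (Fin m) β ℝ) : Set ℝ :=
  { c : ℝ | ∃ (k : ℕ) (L : Matrix (Fin m) (Fin k) ℝ) (R : Matrix (Fin k) β ℝ),
    L * R = A ∧ c = rowNorm2inf L * colNorm12 R }

lemma gamma2_eq {m : ℕ} {β : Type*} [Fintype β] (A : Matrix (Fin m) β ℝ) :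
    gamma2 A = sInf (facs A) := rfl

lemma facs_nonempty {m : ℕ} {β : Type*} [Fintype β] (A : Matrix (Fin m) β ℝ) :
    (facs A).Nonempty := ⟨_, m, 1, A, by simp, rfl⟩

lemma facs_nonneg {m : ℕ} {β : Type*} [Fintype β] (A : Matrix (Fin m) β ℝ) :
    ∀ c ∈ facs A, 0 ≤ c := by
  rintro c ⟨k, L, R, -, rfl⟩
  exact mul_nonneg (rowNorm_nonneg L) (colNorm_nonneg R)

lemma facs_bdd {m : ℕ} {β : Type*} [Fintype β] (A : Matrix (Fin m) β ℝ) :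
    BddBelow (facs A) := ⟨0, facs_nonneg A⟩

lemma gamma2_nonneg {m : ℕ} {β : Type*} [Fintype β] (A : Matrix (Fin m) β ℝ) :
    0 ≤ gamma2 A := Real.sInf_nonneg (facs_nonneg A)

lemma gamma2_sub {m : ℕ} {β β' : Type*} [Fintype β] [Fintype β'] (A : Matrix (Fin m) β ℝ)
    (B : Matrix (Fin m) β' ℝ) (f : β' → β) (h : ∀ x j, B x j = A x (f j)) :
    gamma2 B ≤ gamma2 A := by
  rw [gamma2_eq A]
  refine le_csInf (facs_nonempty A) ?_
  rintro c ⟨k, L, R, hLR, rfl⟩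
  have hmem : rowNorm2inf L * colNorm12 (R.submatrix id f) ∈ facs B := by
    refine ⟨k, L, R.submatrix id f, ?_, rfl⟩
    ext x j
    rw [h, ← hLR]
    simp [Matrix.mul_apply]
  refine (csInf_le (facs_bdd B) hmem).trans ?_
  refine mul_le_mul_of_nonneg_left ?_ (rowNorm_nonneg L)
  refine Real.iSup_le (fun j => ?_) (colNorm_nonneg R)
  exact Real.sqrt_le_iff.2 ⟨colNorm_nonneg R, by simpa using col_le R (f j)⟩

lemma abs_le_gamma2 {m : ℕ} {β : Type*} [Fintype β] (A : Matrix (Fin m) β ℝ) (x : Fin m) (j : β) :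
    |A x j| ≤ gamma2 A := by
  refine le_csInf (facs_nonempty A) ?_
  rintro c ⟨k, L, R, hLR, rfl⟩
  refine abs_le_of_sq_le_sq ?_ (mul_nonneg (rowNorm_nonneg L) (colNorm_nonneg R))
  rw [← hLR, Matrix.mul_apply, mul_pow]
  refine (Finset.sum_mul_sq_le_sq_mul_sq _ _ _).trans ?_
  exact mul_le_mul (row_le L x) (col_le R j) (Finset.sum_nonneg fun _ _ => sq_nonneg _)
    (sq_nonneg _)

/-- The factorization norm of a list of columns. -/
noncomputable def gam {m : ℕ} (l : List (Fin m → ℝ)) : ℝ :=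
  gamma2 (Matrix.of fun (x : Fin m) (s : Fin l.length) => l.get s x)

lemma gam_mono {m : ℕ} (l : List (Fin m → ℝ)) (a : Fin m → ℝ) : gam l ≤ gam (l ++ [a]) := by
  refine gamma2_sub _ _ (fun s => ⟨s.1, by have := s.2; simp⟩) fun x j => ?_
  simp

lemma gam_zero {m : ℕ} {l : List (Fin m → ℝ)} (h : gam l ≤ 0) : ∀ a ∈ l, a = 0 := by
  intro a ha
  obtain ⟨s, rfl⟩ := List.get_of_mem ha
  ext x
  have h1 := (abs_le_gamma2 (Matrix.of fun (x : Fin m) (s : Fin l.length) => l.get s x) x s).trans h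
  simpa using h1

lemma feas_of_gam {m : ℕ} {l : List (Fin m → ℝ)} {g : ℝ} (hg : 0 ≤ g) (h : gam l ≤ g) :
    Feas (2 * g) l := by
  rcases hg.eq_or_lt with rfl | hpos
  · refine ⟨0, fun _ _ => 0, by simp, fun a ha => ⟨0, by simp, fun i => ?_⟩⟩
    rw [gam_zero h a ha]; simp
  · obtain ⟨c, ⟨k, L, R, hLR, rfl⟩, hc⟩ := exists_lt_of_csInf_lt (facs_nonempty _)
      (show sInf (facs (Matrix.of fun (x : Fin m) (s : Fin l.length) => l.get s x)) < 2 * g from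
        lt_of_le_of_lt h (by linarith))
    have hρ := rowNorm_nonneg L
    have hκ := colNorm_nonneg R
    have hcol := col_le R
    have hrow := row_le L
    set ρ := rowNorm2inf L
    set κ := colNorm12 R
    refine ⟨k, fun i j => κ * L i j, fun i => ?_, fun a ha => ?_⟩
    · simp only [mul_pow]
      rw [← Finset.mul_sum]
      calc κ ^ 2 * ∑ j, (L i j) ^ 2 ≤ κ ^ 2 * ρ ^ 2 := by gcongr; exact hrow i
        _ = (ρ * κ) ^ 2 := by ring
        _ ≤ (2 * g) ^ 2 := by gcongr
        _ ≤ _ := by rw [mul_pow]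
    · obtain ⟨s, rfl⟩ := List.get_of_mem ha
      have hs := hcol s
      have hval : ∀ i, l.get s i = ∑ j, L i j * R j s := by
        intro i
        have := congrFun (congrFun hLR i) s
        rw [Matrix.mul_apply] at this
        exact this.symm
      refine ⟨fun j => κ⁻¹ * R j s, ?_, fun i => ?_⟩
      · simp only [mul_pow]
        rw [← Finset.mul_sum]
        rcases hκ.eq_or_lt with h0 | h0
        · rw [← h0]; simp
        · rw [inv_pow, inv_mul_le_iff₀ (by positivity)]; simpa using hs
      · rw [hval i]
        refine Finset.sum_congr rfl fun j _ => ?_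
        rcases hκ.eq_or_lt with h0 | h0
        · have : R j s = 0 := by
            rw [← h0] at hs
            have h1 := Finset.single_le_sum (f := fun j => (R j s) ^ 2)
              (fun i _ => sq_nonneg _) (Finset.mem_univ j)
            have h2 : (R j s) ^ 2 ≤ 0 := by
              refine h1.trans (hs.trans ?_); simp
            exact pow_eq_zero_iff (two_ne_zero) |>.1 (le_antisymm h2 (sq_nonneg _))
          simp [this]
        · field_simp

/-- States of the algorithm with unknown factorization norm. -/
structure WS (m : ℕ) (B : ℝ) where
  pre : List (Fin m → ℝ)
  g : ℝ
  seg : List (Fin m → ℝ)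
  hist : List (Fin m → ℝ)
  g0 : 0 ≤ g
  gle : gam hist ≤ g
  gge : g ≤ 2 * gam hist
  hseg : ∀ b ∈ seg, ∃ a ∈ hist, b = (2 * g)⁻¹ • a
  hpre : ∀ i, rowsq pre i ≤ B * (2 * g) ^ 2 / 3

/-- The columns of the current left factor. -/
noncomputable def WS.cols {m : ℕ} {B : ℝ} (C : List (Fin m → ℝ) → List (Fin m → ℝ))
    (S : WS m B) : List (Fin m → ℝ) :=
  S.pre ++ (C S.seg).map (fun w => (2 * S.g) • w)

lemma WS.feas {m : ℕ} {B : ℝ} (S : WS m B) : Feas 1 S.seg := by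
  obtain ⟨n, M, hrow, hM⟩ := feas_of_gam S.g0 S.gle
  refine ⟨n, fun i j => (2 * S.g)⁻¹ * M i j, fun i => ?_, fun b hb => ?_⟩
  · simp only [mul_pow]
    rw [← Finset.mul_sum]
    have h1 := hrow i
    rcases S.g0.eq_or_lt with h0 | h0
    · rw [← h0]; simp
    · rw [inv_pow, inv_mul_le_iff₀ (by positivity)]; linarith
  · obtain ⟨a, ha, rfl⟩ := S.hseg b hb
    obtain ⟨y, hy, hya⟩ := hM a ha
    refine ⟨y, hy, fun i => ?_⟩
    rw [Pi.smul_apply, smul_eq_mul, ← hya i, Finset.mul_sum]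
    exact Finset.sum_congr rfl fun j _ => by ring

lemma WS.rowsq_le {m : ℕ} {B : ℝ} (C : List (Fin m → ℝ) → List (Fin m → ℝ))
    (hC : ∀ l, Feas 1 l → ∀ i, rowsq (C l) i ≤ B) (S : WS m B) (i : Fin m) :
    rowsq (S.cols C) i ≤ B * (2 * S.g) ^ 2 * (4 / 3) := by
  unfold WS.cols
  rw [rowsq_append, rowsq_smul]
  have h1 := S.hpre i
  have h2 := mul_le_mul_of_nonneg_left (hC _ S.feas i) (sq_nonneg (2 * S.g))
  linarith

lemma WS.step {m : ℕ} {B : ℝ} (hB : 0 ≤ B) (C : List (Fin m → ℝ) → List (Fin m → ℝ))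
    (hC1 : ∀ l a, ∃ W, C (l ++ [a]) = C l ++ W)
    (hC2 : ∀ l, Feas 1 l → ∀ i, rowsq (C l) i ≤ B)
    (hC3 : ∀ l a, Feas 1 (l ++ [a]) → Cov (C (l ++ [a])) 1 a)
    (S : WS m B) (a : Fin m → ℝ) :
    ∃ S' : WS m B, S'.hist = S.hist ++ [a] ∧ (∃ W, S'.cols C = S.cols C ++ W) ∧
      Cov (S'.cols C) 1 a := by
  have fin : ∀ (S' : WS m B) (l : List (Fin m → ℝ)), S'.hist = S.hist ++ [a] →
      S'.seg = l ++ [(2 * S'.g)⁻¹ • a] → Cov (S'.cols C) 1 a := by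
    intro S' l hh hs
    have hf := S'.feas
    rw [hs] at hf
    have h1 := ((hC3 _ _ hf).map_smul (2 * S'.g)).append_left S'.pre
    unfold WS.cols
    rw [hs]
    convert h1 using 1
    rcases S'.g0.eq_or_lt with h0 | h0
    · have : a = 0 := gam_zero (l := S'.hist) (by rw [h0]; exact S'.gle) a (by simp [hh])
      rw [this]; simp
    · rw [smul_smul, mul_inv_cancel₀ (by positivity), one_smul]
  by_cases h : gam (S.hist ++ [a]) ≤ S.g
  · let S' : WS m B := ⟨S.pre, S.g, S.seg ++ [(2 * S.g)⁻¹ • a], S.hist ++ [a], S.g0, h,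
      S.gge.trans (by have := gam_mono S.hist a; linarith), by
        intro b hb
        rcases List.mem_append.1 hb with hb | hb
        · obtain ⟨a', ha', rfl⟩ := S.hseg b hb
          exact ⟨a', List.mem_append_left _ ha', rfl⟩
        · exact ⟨a, by simp, by simpa using hb⟩, S.hpre⟩
    refine ⟨S', rfl, ?_, fin S' S.seg rfl rfl⟩
    obtain ⟨W, hW⟩ := hC1 S.seg ((2 * S.g)⁻¹ • a)
    exact ⟨W.map (fun w => (2 * S.g) • w), by
      show S.pre ++ (C (S.seg ++ [(2 * S.g)⁻¹ • a])).map (fun w => (2 * S.g) • w) = (S.pre ++ (C S.seg).map (fun w => (2 * S.g) • w)) ++ _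
      rw [hW, List.map_append, List.append_assoc]⟩
  · have hlt := not_le.1 h
    have hg0 := S.g0
    let S' : WS m B := ⟨S.cols C, 2 * gam (S.hist ++ [a]),
      [(2 * (2 * gam (S.hist ++ [a])))⁻¹ • a], S.hist ++ [a], by linarith, by linarith, le_rfl, by
        intro b hb
        exact ⟨a, by simp, by simpa using hb⟩, by
        intro i
        refine (S.rowsq_le C hC2 i).trans ?_
        have : (2 * S.g) ^ 2 * 4 ≤ (2 * (2 * gam (S.hist ++ [a]))) ^ 2 := by nlinarith
        nlinarith⟩
    exact ⟨S', rfl, ⟨_, rfl⟩, fin S' [] rfl rfl⟩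

theorem full (m : ℕ) (hm : 1 ≤ m) : ∃ D : List (Fin m → ℝ) → List (Fin m → ℝ),
    (∀ l a, ∃ W, D (l ++ [a]) = D l ++ W) ∧
    (∀ l i, rowsq (D l) i ≤ (200 * gam l * (Real.logb 2 (2 * m)) ^ 3) ^ 2) ∧
    (∀ l a, Cov (D (l ++ [a])) 1 a) := by
  obtain ⟨C, hC1, hC2, hC3⟩ := core m hm
  have hm' : (1 : ℝ) ≤ m := by exact_mod_cast hm
  set ℓ := Real.logb 2 (2 * m) with hℓ
  have hℓ1 : 1 ≤ ℓ := by
    rw [hℓ, Real.le_logb_iff_rpow_le (by norm_num) (by positivity)]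
    norm_num; linarith
  set B := 1872 * ℓ ^ 4 with hBdef
  have hB : 0 ≤ B := by positivity
  have hnil : gam ([] : List (Fin m → ℝ)) = 0 := by
    refine le_antisymm ?_ (gamma2_nonneg _)
    refine csInf_le (facs_bdd _) ⟨m, 1, _, Matrix.one_mul _, ?_⟩
    have he : IsEmpty (Fin ([] : List (Fin m → ℝ)).length) := ⟨fun s => s.elim0⟩
    simp [colNorm12]
  let S0 : WS m B := ⟨[], 0, [], [], le_rfl, hnil.le, by rw [hnil]; simp, by simp, by
    intro i; simp [rowsq]⟩
  choose nxt hn1 hn2 hn3 using fun (S : WS m B) a => S.step hB C hC1 hC2 hC3 a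
  let st : List (Fin m → ℝ) → WS m B := fun l => l.foldl nxt S0
  have hst : ∀ l a, st (l ++ [a]) = nxt (st l) a := fun l a => by simp [st]
  have hhist : ∀ l, (st l).hist = l := by
    intro l
    induction l using List.reverseRecOn with
    | nil => rfl
    | append_singleton l a ih => rw [hst, hn1, ih]
  refine ⟨fun l => (st l).cols C, fun l a => ?_, fun l i => ?_, fun l a => ?_⟩
  · simp only [hst]; exact hn2 _ _
  · refine ((st l).rowsq_le C hC2 i).trans ?_
    have h1 := (st l).gge
    rw [hhist] at h1
    have h0 := (st l).g0
    have hγ : 0 ≤ gam l := gamma2_nonneg _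
    have h2 : (2 * (st l).g) ^ 2 ≤ (4 * gam l) ^ 2 := by
      have : 2 * (st l).g ≤ 4 * gam l := by linarith
      gcongr
    have h3 : ℓ ^ 4 ≤ ℓ ^ 6 := pow_le_pow_right₀ hℓ1 (by norm_num)
    calc B * (2 * (st l).g) ^ 2 * (4 / 3) ≤ B * (4 * gam l) ^ 2 * (4 / 3) := by gcongr
      _ = 39936 * (gam l) ^ 2 * ℓ ^ 4 := by rw [hBdef]; ring
      _ ≤ 40000 * (gam l) ^ 2 * ℓ ^ 6 := by gcongr; norm_num
      _ = _ := by ring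
  · simp only [hst]; exact hn3 _ _

end OF

/-- An online factorization algorithm in the column arrival model is encoded by functions
of the sequence of columns received so far: `k l` is the number of columns of the
current matrix `L`, `col l i` is its `i`-th column, and `r l` is the current column
vector (one coordinate per column of `L`). -/
theorem stmt8 :
    ∃ K : ℝ, 0 < K ∧ ∀ m : ℕ,
    ∃ (k : List (Fin m → ℝ) → ℕ) (col : List (Fin m → ℝ) → ℕ → (Fin m → ℝ))
      (r : List (Fin m → ℝ) → ℕ → ℝ),
      -- online structure: `L_t` extends `L_{t-1}` by appending columns, and `L_t r_t = a_t`
      (∀ l a, k l ≤ k (l ++ [a]) ∧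
        (∀ i < k l, col (l ++ [a]) i = col l i) ∧
        (∀ x : Fin m,
          ∑ i ∈ Finset.range (k (l ++ [a])), col (l ++ [a]) i x * r (l ++ [a]) i = a x)) ∧
      -- the guarantee, when the algorithm is run on the columns of `A`
      (∀ (N : ℕ) (A : Matrix (Fin m) (Fin N) ℝ),
        -- `‖r_t‖₂ ≤ 1` for every `t ∈ {1,…,N}`
        (∀ (t : ℕ) (ht : t ≤ N), 1 ≤ t →
          ∀ pl : List (Fin m → ℝ),
            pl = List.ofFn (fun s : Fin t => fun x => A x (Fin.castLE ht s)) →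
            Real.sqrt (∑ i ∈ Finset.range (k pl), (r pl i) ^ 2) ≤ 1) ∧
        -- `‖L_N‖_{2→∞} ≤ K·γ₂(A)·(log₂ 2m)³`
        (∀ pl : List (Fin m → ℝ), pl = List.ofFn (fun s : Fin N => fun x => A x s) →
          ∀ x : Fin m,
            Real.sqrt (∑ i ∈ Finset.range (k pl), (col pl i x) ^ 2) ≤
              K * gamma2 A * (Real.logb 2 (2 * m)) ^ 3)) := by
  refine ⟨200, by norm_num, fun m => ?_⟩
  rcases Nat.eq_zero_or_pos m with rfl | hm
  · refine ⟨fun _ => 0, fun _ _ => 0, fun _ _ => 0, fun l a => ⟨le_rfl, by simp, fun x => x.elim0⟩,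
      fun N A => ⟨by simp, fun _ _ x => x.elim0⟩⟩
  obtain ⟨D, hD1, hD2, hD3⟩ := OF.full m hm
  have hr : ∀ l : List (Fin m → ℝ), ∃ y : ℕ → ℝ, ∀ l' a, l = l' ++ [a] →
      ∑ i ∈ Finset.range (D l).length, (y i) ^ 2 ≤ 1 ∧
      ∀ t, ∑ i ∈ Finset.range (D l).length, ((D l).getD i 0) t * y i = a t := by
    intro l
    induction l using List.reverseRecOn with
    | nil => exact ⟨0, fun l' a h => by simp at h⟩
    | append_singleton l a _ =>
      obtain ⟨y, hy⟩ := hD3 l a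
      refine ⟨y, fun l' a' h => ?_⟩
      obtain ⟨-, h2⟩ := List.append_inj' h rfl
      have : a = a' := by simpa using h2
      subst this
      exact hy
  choose r hr using hr
  refine ⟨fun l => (D l).length, fun l i => (D l).getD i 0, r, fun l a => ⟨?_, ?_, ?_⟩,
    fun N A => ⟨?_, ?_⟩⟩
  · obtain ⟨W, hW⟩ := hD1 l a
    simp [hW]
  · intro i hi
    obtain ⟨W, hW⟩ := hD1 l a
    simp only [hW]
    exact List.getD_append _ _ _ _ hi
  · exact (hr (l ++ [a]) l a rfl).2
  · intro t ht h1 pl hpl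
    have hne : pl ≠ [] := by
      rintro rfl
      have := congrArg List.length hpl
      simp at this
      omega
    have := (hr pl pl.dropLast (pl.getLast hne) (List.dropLast_append_getLast hne).symm).1
    exact Real.sqrt_le_one.2 this
  · intro pl hpl x
    have hg : OF.gam pl ≤ gamma2 A := by
      have hlen : pl.length = N := by rw [hpl]; simp
      refine OF.gamma2_sub A _ (Fin.cast hlen) fun x j => ?_
      subst hpl
      simp
      rfl
    have hm' : (1 : ℝ) ≤ m := by exact_mod_cast hm
    have hl : 0 ≤ Real.logb 2 (2 * m) := Real.logb_nonneg (by norm_num) (by linarith)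
    have h0 : 0 ≤ OF.gam pl := OF.gamma2_nonneg _
    have h1 : Real.sqrt (OF.rowsq (D pl) x) ≤ 200 * OF.gam pl * (Real.logb 2 (2 * m)) ^ 3 :=
      Real.sqrt_le_iff.2 ⟨by positivity, hD2 pl x⟩
    refine h1.trans ?_
    gcongr
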